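/- Comparison with a memoryless reference measure (generalised Böcherer–Amjad bound): In the setting of the main comparison theorem with the standard length function ℓ ≡ 1 on interior nodes (so ℓ(P) = ℓ_♯(P)), assume additionally that the local entropy H_q(x) equals a constant h (finite) for every interior node x. Then for every ε > 0 (with uniform-summability witness M_ε) and every δ with 0 < δ < 1/2, |H(P)/ℓ_♯(P) − h| ≤ 2ε + M_ε·φ(δ) + (C/δ)·√(D(P‖Q)/ℓ_♯(P)), where C = 2√2/(e·√(ln 2)). -/

import Mathlib

open scoped BigOperators
open Filter

noncomputable section

/-- The entropy function `φ(t) = t·log₂(1/t)` (which vanishes at `t = 0`). -/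
def phi (t : ℝ) : ℝ := t * Real.logb 2 (1 / t)

/-- A rooted tree: a set of finite lists over ℕ containing the empty list (the root)
and closed under taking prefixes. -/
def IsTree (T : Set (List ℕ)) : Prop :=
  ([] : List ℕ) ∈ T ∧ ∀ x ∈ T, ∀ y : List ℕ, y <+: x → y ∈ T

/-- The successors of `x` in `T`: one-entry extensions of `x` lying in `T`. -/
def succs (T : Set (List ℕ)) (x : List ℕ) : Set (List ℕ) :=
  {y | y ∈ T ∧ ∃ n : ℕ, y = x ++ [n]}

/-- `x` is a leaf of `T`. -/
def IsLeaf (T : Set (List ℕ)) (x : List ℕ) : Prop :=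
  x ∈ T ∧ succs T x = ∅

/-- The boundary of `T`: its set of leaves. -/
def bdry (T : Set (List ℕ)) : Set (List ℕ) := {x | IsLeaf T x}

/-- The interior of `T`. -/
def intr (T : Set (List ℕ)) : Set (List ℕ) := T \ bdry T

/-- No vertex has exactly one successor. -/
def NoUnary (T : Set (List ℕ)) : Prop :=
  ∀ x ∈ T, ∀ y : List ℕ, succs T x ≠ {y}

/-- `T` has no infinite geodesic. -/
def NoInfGeo (T : Set (List ℕ)) : Prop :=
  ¬ ∃ ξ : ℕ → ℕ, ∀ n : ℕ, (List.ofFn fun i : Fin n => ξ i) ∈ T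

/-- `∂T_x`: the set of leaves having `x` as a prefix. -/
def cone (T : Set (List ℕ)) (x : List ℕ) : Set (List ℕ) :=
  {v | v ∈ bdry T ∧ x <+: v}

/-- `P(∂T_x)`. -/
def mass (T : Set (List ℕ)) (P : List ℕ → ℝ) (x : List ℕ) : ℝ :=
  ∑' v : cone T x, P v

/-- `|x|_ℓ`: the sum of `ℓ(y)` over the proper prefixes `y` of `x`. -/
def lenWt (ℓ : List ℕ → ℝ) (x : List ℕ) : ℝ :=
  ∑ i ∈ Finset.range x.length, ℓ (x.take i)

/-- Expected length `ℓ(P)`. -/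
def expLen (T : Set (List ℕ)) (ℓ P : List ℕ → ℝ) : ℝ :=
  ∑' v : bdry T, lenWt ℓ v * P v

/-- Forward transition probability `p(y|x) = P(∂T_y)/P(∂T_x)`. -/
def fwd (T : Set (List ℕ)) (P : List ℕ → ℝ) (x y : List ℕ) : ℝ :=
  mass T P y / mass T P x

/-- Node-average measure `μ_P(x) = ℓ(x)·P(∂T_x)/ℓ(P)`. -/
def nodeAvg (T : Set (List ℕ)) (ℓ P : List ℕ → ℝ) (x : List ℕ) : ℝ :=
  ℓ x * mass T P x / expLen T ℓ P

/-- A (fully supported) probability measure on a set `S` of vertices. -/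
def IsProbOn (S : Set (List ℕ)) (P : List ℕ → ℝ) : Prop :=
  (∀ v ∈ S, 0 < P v) ∧ HasSum (fun v : S => P v) 1

/-- The local entropy `H_q(x) = ∑_{y∈N(x)} φ(q(y|x))`. -/
def Hloc (T : Set (List ℕ)) (Q : List ℕ → ℝ) (x : List ℕ) : ℝ :=
  ∑' y : succs T x, phi (fwd T Q x y)

/-!
By the chain rule, `D(P‖Q)` is the Kullback–Leibler divergence between two measures on the edges
`(x, y)` of the tree, `P(∂T_y)` and `P(∂T_x)·q(y|x)`, which have the same total mass `ℓ_♯(P)`.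
Pinsker's inequality therefore bounds the `ℓ¹` distance of `p(·|x)` and `q(·|x)`, summed over the
interior vertices with weights `P(∂T_x)`. A modulus of continuity for `φ` with a linear term turns
this into a bound on `H_p(x) - h`, and the weighted sum of the local entropies `H_p(x)` is `H(P)`.
-/

section NegMulLog

lemma negMulLog_le_exp_neg_one {t : ℝ} (ht : 0 ≤ t) : t.negMulLog ≤ Real.exp (-1) := by
  rcases ht.eq_or_lt with rfl | ht
  · simpa using (Real.exp_pos (-1)).le
  · calc t.negMulLog = -Real.log t * Real.exp (- -Real.log t) := by
          rw [neg_neg, Real.exp_log ht, Real.negMulLog]; ring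
      _ ≤ Real.exp (-1) := Real.mul_exp_neg_le_exp_neg_one _

lemma negMulLog_add_le {s t : ℝ} (hs : 0 ≤ s) (ht : 0 ≤ t) :
    (s + t).negMulLog ≤ s.negMulLog + t.negMulLog := by
  have mul_log_le {a b : ℝ} (ha : 0 ≤ a) (hab : a ≤ b) : a * Real.log a ≤ a * Real.log b := by
    rcases ha.eq_or_lt with rfl | ha
    · simp
    · gcongr
  have := mul_log_le hs (le_add_of_nonneg_right ht)
  have := mul_log_le ht (le_add_of_nonneg_left hs)
  simp only [Real.negMulLog]
  linarith

lemma negMulLog_sub_negMulLog_le {s t : ℝ} (hs : 0 ≤ s) (hst : s ≤ t) (ht : t ≤ 1) :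
    s.negMulLog - t.negMulLog ≤ t - s := by
  rcases hs.eq_or_lt with rfl | hs
  · simpa using (neg_nonpos.2 (Real.negMulLog_nonneg hst ht)).trans hst
  have hlog : t * Real.log t ≤ s * Real.log t :=
    mul_le_mul_of_nonpos_right hst (Real.log_nonpos (hs.le.trans hst) ht)
  have hratio : s * (Real.log t - Real.log s) ≤ t - s := by
    rw [← Real.log_div (hs.trans_le hst).ne' hs.ne']
    calc s * Real.log (t / s) ≤ s * (t / s - 1) := by
          gcongr; exact Real.log_le_sub_one_of_pos (div_pos (hs.trans_le hst) hs)
      _ = t - s := by field_simp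
  simp only [Real.negMulLog]
  linarith

lemma le_negMulLog {t : ℝ} (h0 : 0 ≤ t) (h1 : t ≤ Real.exp (-1)) : t ≤ t.negMulLog := by
  rcases h0.eq_or_lt with rfl | h0
  · simp
  · have := (Real.log_le_iff_le_exp h0).2 h1
    rw [Real.negMulLog]
    nlinarith

lemma abs_negMulLog_sub_le {s t : ℝ} (hs : s ∈ Set.Icc 0 1) (ht : t ∈ Set.Icc 0 1)
    (hst : |s - t| ≤ Real.exp (-1)) :
    |s.negMulLog - t.negMulLog| ≤ |s - t|.negMulLog := by
  wlog hle : s ≤ t generalizing s t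
  · rw [abs_sub_comm, abs_sub_comm s] at *
    exact this ht hs hst (le_of_not_ge hle)
  rw [abs_sub_comm s, abs_of_nonneg (sub_nonneg.2 hle)] at *
  have hinc := negMulLog_add_le hs.1 (sub_nonneg.2 hle)
  rw [add_sub_cancel] at hinc
  have hdec := negMulLog_sub_negMulLog_le hs.1 hle ht.2
  have := le_negMulLog (sub_nonneg.2 hle) hst
  exact abs_le.2 ⟨by linarith, by linarith⟩

lemma negMulLog_half_le {δ : ℝ} (h0 : 0 < δ) (h1 : δ ≤ 1 / 2) :
    (δ / 2).negMulLog ≤ δ.negMulLog := by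
  have hlog : Real.log δ ≤ -Real.log 2 := by
    rw [← Real.log_inv]
    exact Real.log_le_log h0 (by simpa using h1)
  rw [Real.negMulLog, Real.negMulLog, Real.log_div h0.ne' two_ne_zero]
  nlinarith

/- Increments above `δ / 2` are paid for by the linear term, since `negMulLog ≤ 1 / e`; the smaller
ones lie where `negMulLog` is increasing. -/
lemma abs_negMulLog_sub_le_add {s t δ : ℝ} (hs : s ∈ Set.Icc 0 1) (ht : t ∈ Set.Icc 0 1)
    (hδ0 : 0 < δ) (hδ : δ ≤ 1 / 2) :
    |s.negMulLog - t.negMulLog| ≤ δ.negMulLog + 2 * Real.exp (-1) / δ * |s - t| := by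
  have hδφ : 0 ≤ δ.negMulLog := Real.negMulLog_nonneg hδ0.le (by linarith)
  rcases le_total |s - t| (δ / 2) with hsmall | hlarge
  · have hexp : δ / 2 ≤ Real.exp (-1) := by linarith [Real.exp_neg_one_gt_d9]
    have hmono : |s - t|.negMulLog ≤ (δ / 2).negMulLog := by
      have := Real.mul_log_strictAntiOn.antitoneOn ⟨abs_nonneg _, hsmall.trans hexp⟩
        ⟨by positivity, hexp⟩ hsmall
      simpa [Real.negMulLog] using this
    calc |s.negMulLog - t.negMulLog| ≤ |s - t|.negMulLog :=
          abs_negMulLog_sub_le hs ht (hsmall.trans hexp)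
      _ ≤ δ.negMulLog := hmono.trans (negMulLog_half_le hδ0 hδ)
      _ ≤ _ := le_add_of_nonneg_right (by positivity)
  · calc |s.negMulLog - t.negMulLog| ≤ Real.exp (-1) :=
          abs_sub_le_of_nonneg_of_le (Real.negMulLog_nonneg hs.1 hs.2)
            (negMulLog_le_exp_neg_one hs.1) (Real.negMulLog_nonneg ht.1 ht.2)
            (negMulLog_le_exp_neg_one ht.1)
      _ = 2 * Real.exp (-1) / δ * (δ / 2) := by field_simp
      _ ≤ 2 * Real.exp (-1) / δ * |s - t| := by gcongr
      _ ≤ _ := le_add_of_nonneg_left hδφ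

end NegMulLog

section Phi

lemma phi_eq_negMulLog_div (t : ℝ) : phi t = t.negMulLog / Real.log 2 := by
  rw [phi, Real.logb, one_div, Real.log_inv, Real.negMulLog]
  ring

lemma phi_nonneg {t : ℝ} (h0 : 0 ≤ t) (h1 : t ≤ 1) : 0 ≤ phi t := by
  rw [phi_eq_negMulLog_div]
  exact div_nonneg (Real.negMulLog_nonneg h0 h1) (Real.log_nonneg one_le_two)

lemma abs_phi_sub_le {s t δ : ℝ} (hs : s ∈ Set.Icc 0 1) (ht : t ∈ Set.Icc 0 1)
    (hδ0 : 0 < δ) (hδ : δ ≤ 1 / 2) :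
    |phi s - phi t| ≤ phi δ + 2 / (Real.exp 1 * Real.log 2) / δ * |s - t| := by
  have hlog : 0 < Real.log 2 := Real.log_pos one_lt_two
  calc |phi s - phi t| = |s.negMulLog - t.negMulLog| / Real.log 2 := by
        rw [phi_eq_negMulLog_div, phi_eq_negMulLog_div, ← sub_div, abs_div, abs_of_pos hlog]
    _ ≤ (δ.negMulLog + 2 * Real.exp (-1) / δ * |s - t|) / Real.log 2 := by
        gcongr; exact abs_negMulLog_sub_le_add hs ht hδ0 hδ
    _ = phi δ + 2 / (Real.exp 1 * Real.log 2) / δ * |s - t| := by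
        rw [phi_eq_negMulLog_div, Real.exp_neg]
        field_simp

end Phi

section Pinsker

open InformationTheory

lemma three_mul_sub_one_sq_le_klFun {t : ℝ} (ht : 0 ≤ t) :
    3 * (t - 1) ^ 2 ≤ (2 * t + 4) * klFun t := by
  let F (t : ℝ) : ℝ := (2 * t + 4) * klFun t - 3 * (t - 1) ^ 2
  let F' (t : ℝ) : ℝ := 2 * klFun t + (2 * t + 4) * Real.log t - 6 * (t - 1)
  let F'' (t : ℝ) : ℝ := 4 * (Real.log t - (1 - t⁻¹))
  have hF {t : ℝ} (ht : t ≠ 0) : HasDerivAt F (F' t) t := by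
    have := ((((hasDerivAt_id t).const_mul 2).add_const 4).mul (hasDerivAt_klFun ht)).sub
      ((((hasDerivAt_id t).sub_const 1).pow 2).const_mul 3)
    refine this.congr_deriv ?_
    simp only [F', id]
    ring
  have hF' {t : ℝ} (ht : t ≠ 0) : HasDerivAt F' (F'' t) t := by
    have := (((hasDerivAt_klFun ht).const_mul 2).add
      ((((hasDerivAt_id t).const_mul 2).add_const 4).mul (Real.hasDerivAt_log ht))).sub
      (((hasDerivAt_id t).sub_const 1).const_mul 6)
    refine this.congr_deriv ?_
    simp only [F'', id]
    field_simp
    ring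
  have hconvex : ConvexOn ℝ (Set.Ici 0) F := by
    refine convexOn_of_hasDerivWithinAt2_nonneg (f' := F') (f'' := F'') (convex_Ici 0)
      (by fun_prop) ?_ ?_ ?_ <;> rw [interior_Ici] <;> intro x (hx : 0 < x)
    · exact (hF hx.ne').hasDerivWithinAt
    · exact (hF' hx.ne').hasDerivWithinAt
    · have := Real.one_sub_inv_le_log_of_pos hx
      simp only [F'']
      linarith
  have hF'1 : derivWithin F (Set.Ioi 1) 1 = 0 := by
    rw [(hF one_ne_zero).hasDerivWithinAt.derivWithin (uniqueDiffWithinAt_Ioi 1)]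
    simp [F', klFun_one]
  have hmin : F 1 ≤ F t := hconvex.isMinOn_of_rightDeriv_eq_zero (by simp) hF'1 ht
  exact sub_nonneg.1 (by simpa [F, klFun_one] using hmin)

lemma mul_log_div_sub_add_eq_mul_klFun {a b : ℝ} (hb : b ≠ 0) :
    a * Real.log (a / b) - a + b = b * klFun (a / b) := by
  rw [klFun_apply]
  field_simp
  ring

lemma sq_abs_sub_le_mul_log_div {a b : ℝ} (ha : 0 ≤ a) (hb : 0 ≤ b) (hab : b = 0 → a = 0) :
    |a - b| ^ 2 ≤ (2 * a + 4 * b) / 3 * (a * Real.log (a / b) - a + b) := by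
  rcases hb.eq_or_lt with rfl | hb
  · simp [hab rfl]
  calc |a - b| ^ 2 = b ^ 2 * (a / b - 1) ^ 2 := by rw [sq_abs]; field_simp
    _ ≤ b ^ 2 * ((2 * (a / b) + 4) * klFun (a / b) / 3) := by
        gcongr
        linarith [three_mul_sub_one_sq_le_klFun (div_nonneg ha hb.le)]
    _ = (2 * a + 4 * b) / 3 * (a * Real.log (a / b) - a + b) := by
        rw [mul_log_div_sub_add_eq_mul_klFun hb.ne']; field_simp

lemma tsum_le_sqrt_of_sq_le_mul {ι : Type*} {f a c : ι → ℝ} {A C : ℝ} (hf : Summable f)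
    (ha : ∀ i, 0 ≤ a i) (hc : ∀ i, 0 ≤ c i) (hsq : ∀ i, f i ^ 2 ≤ a i * c i)
    (hA : HasSum a A) (hC : HasSum c C) : ∑' i, f i ≤ √(A * C) := by
  refine hf.tsum_le_of_sum_le fun s => Real.le_sqrt_of_sq_le ?_
  calc (∑ i ∈ s, f i) ^ 2 ≤ (∑ i ∈ s, a i) * ∑ i ∈ s, c i :=
        Finset.sum_sq_le_sum_mul_sum_of_sq_le_mul s (fun i _ => ha i) (fun i _ => hc i)
          fun i _ => hsq i
    _ ≤ A * C := mul_le_mul (sum_le_hasSum s (fun i _ => ha i) hA)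
        (sum_le_hasSum s (fun i _ => hc i) hC) (Finset.sum_nonneg fun i _ => hc i) (hA.nonneg ha)

lemma pinsker_tsum_abs_sub_le_sqrt {ι : Type*} {a b : ι → ℝ} {L D : ℝ} (ha : ∀ i, 0 ≤ a i)
    (hb : ∀ i, 0 ≤ b i) (hab : ∀ i, b i = 0 → a i = 0) (haL : HasSum a L) (hbL : HasSum b L)
    (hD : HasSum (fun i => a i * Real.log (a i / b i)) D) :
    ∑' i, |a i - b i| ≤ √(2 * L * D) := by
  have hweight : HasSum (fun i => (2 * a i + 4 * b i) / 3) (2 * L) := by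
    have := ((haL.mul_left 2).add (hbL.mul_left 4)).div_const 3
    rwa [show (2 * L + 4 * L) / 3 = 2 * L by ring] at this
  have hdiv : HasSum (fun i => a i * Real.log (a i / b i) - a i + b i) D := by
    simpa using (hD.sub haL).add hbL
  have hdiv_nonneg (i : ι) : 0 ≤ a i * Real.log (a i / b i) - a i + b i := by
    rcases (hb i).eq_or_lt with h0 | h0
    · simp [hab i h0.symm, ← h0]
    · rw [mul_log_div_sub_add_eq_mul_klFun h0.ne']
      exact mul_nonneg h0.le (klFun_nonneg (div_nonneg (ha i) h0.le))
  exact tsum_le_sqrt_of_sq_le_mul (haL.summable.sub hbL.summable).abs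
    (fun i => by have := ha i; have := hb i; positivity) hdiv_nonneg
    (fun i => sq_abs_sub_le_mul_log_div (ha i) (hb i) (hab i)) hweight hdiv

end Pinsker

section Series

lemma hasSum_sigma_of_nonneg {ι : Type*} {κ : ι → Type*} {f : (Σ i, κ i) → ℝ} {g : ι → ℝ} {s : ℝ}
    (hf : ∀ z, 0 ≤ f z) (hg : ∀ i, HasSum (fun k => f ⟨i, k⟩) (g i)) (hs : HasSum g s) :
    HasSum f s := by
  refine hs.sigma_of_hasSum hg ((summable_sigma_of_nonneg hf).2 ⟨fun i => (hg i).summable, ?_⟩)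
  simpa only [(hg _).tsum_eq] using hs.summable

lemma hasSum_comm_of_nonneg {ι κ : Type*} {f : ι → κ → ℝ} {g : ι → ℝ} {g' : κ → ℝ} {s : ℝ}
    (hf : ∀ i k, 0 ≤ f i k) (hg : ∀ i, HasSum (f i) (g i))
    (hg' : ∀ k, HasSum (fun i => f i k) (g' k)) (hs : HasSum g s) : HasSum g' s := by
  have hsigma : HasSum (fun z : Σ _ : ι, κ => f z.1 z.2) s :=
    hasSum_sigma_of_nonneg (fun z => hf z.1 z.2) hg hs
  have hswap : HasSum (fun z : κ × ι => f z.2 z.1) s :=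
    ((Equiv.prodComm κ ι).trans (Equiv.sigmaEquivProd ι κ).symm).hasSum_iff.2 hsigma
  exact hswap.prod_fiberwise hg'

end Series

section LocalEntropy

variable {α : Type*} {S : Set α} {F : Finset α} {p q : α → ℝ} {M : ℕ} {ε δ : ℝ}

/-- A finite set `F ⊆ S` of at most `M` points, outside which the entropies of both `p` and `q`
are below `ε`: the witness `N_ε(x)` of uniform summability, for `S = N(x)`. -/
def HasSmallTails (S : Set α) (p q : α → ℝ) (M : ℕ) (ε : ℝ) : Prop :=
  ∃ F : Finset α, ↑F ⊆ S ∧ F.card ≤ M ∧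
    (Summable fun y : {y : α // y ∈ S ∧ y ∉ F} => phi (p y)) ∧
    (∑' y : {y : α // y ∈ S ∧ y ∉ F}, phi (p y)) < ε ∧
    (Summable fun y : {y : α // y ∈ S ∧ y ∉ F} => phi (q y)) ∧
    (∑' y : {y : α // y ∈ S ∧ y ∉ F}, phi (q y)) < ε

lemma tsum_eq_sum_add_tsum_notMem {f : α → ℝ} (hF : ↑F ⊆ S)
    (hf : Summable fun y : {y : α // y ∈ S ∧ y ∉ F} => f y) :
    ∑' y : S, f y = ∑ y ∈ F, f y + ∑' y : {y : α // y ∈ S ∧ y ∉ F}, f y := by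
  have h := (F.hasSum f).add_disjoint (t := S \ F) Set.disjoint_sdiff_right hf.hasSum
  rw [Set.union_sdiff_cancel hF] at h
  exact h.tsum_eq

lemma sum_le_tsum_subtype {f : α → ℝ} (hF : ↑F ⊆ S) (hf0 : ∀ y ∈ S, 0 ≤ f y)
    (hf : Summable fun y : S => f y) : ∑ y ∈ F, f y ≤ ∑' y : S, f y := by
  rw [← Finset.tsum_subtype']
  exact (F.hasSum f).summable.tsum_le_tsum_of_inj (Set.inclusion hF) (Set.inclusion_injective hF)
    (fun y _ => hf0 y y.2) (fun _ => le_rfl) hf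

lemma abs_sum_phi_sub_sum_phi_le (hp : ∀ y ∈ F, p y ∈ Set.Icc 0 1) (hq : ∀ y ∈ F, q y ∈ Set.Icc 0 1)
    (hδ0 : 0 < δ) (hδ : δ ≤ 1 / 2) :
    |∑ y ∈ F, phi (p y) - ∑ y ∈ F, phi (q y)|
      ≤ F.card * phi δ + 2 / (Real.exp 1 * Real.log 2) / δ * ∑ y ∈ F, |p y - q y| := by
  calc |∑ y ∈ F, phi (p y) - ∑ y ∈ F, phi (q y)|
      ≤ ∑ y ∈ F, |phi (p y) - phi (q y)| := by
        rw [← Finset.sum_sub_distrib]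
        exact Finset.abs_sum_le_sum_abs _ _
    _ ≤ ∑ y ∈ F, (phi δ + 2 / (Real.exp 1 * Real.log 2) / δ * |p y - q y|) :=
        Finset.sum_le_sum fun y hy => abs_phi_sub_le (hp y hy) (hq y hy) hδ0 hδ
    _ = _ := by rw [Finset.sum_add_distrib, ← Finset.mul_sum, Finset.sum_const, nsmul_eq_mul]

lemma abs_tsum_phi_sub_tsum_phi_le (hp : ∀ y ∈ S, p y ∈ Set.Icc 0 1)
    (hq : ∀ y ∈ S, q y ∈ Set.Icc 0 1) (hpq : Summable fun y : S => |p y - q y|)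
    (htails : HasSmallTails S p q M ε) (hδ0 : 0 < δ) (hδ : δ ≤ 1 / 2) :
    |∑' y : S, phi (p y) - ∑' y : S, phi (q y)|
      ≤ ε + M * phi δ + 2 / (Real.exp 1 * Real.log 2) / δ * ∑' y : S, |p y - q y| := by
  obtain ⟨F, hFS, hFM, hsummable_p, htail_p, hsummable_q, htail_q⟩ := htails
  have tail_nonneg {r : α → ℝ} (hr : ∀ y ∈ S, r y ∈ Set.Icc 0 1) :
      0 ≤ ∑' y : {y : α // y ∈ S ∧ y ∉ F}, phi (r y) :=
    tsum_nonneg fun y => phi_nonneg (hr y y.2.1).1 (hr y y.2.1).2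
  have htails := abs_sub_le_of_nonneg_of_le (tail_nonneg hp) htail_p.le (tail_nonneg hq) htail_q.le
  have hsum_le : ∑ y ∈ F, |p y - q y| ≤ ∑' y : S, |p y - q y| :=
    sum_le_tsum_subtype hFS (fun _ _ => abs_nonneg _) hpq
  have hφ : 0 ≤ phi δ := phi_nonneg hδ0.le (by linarith)
  have hsplit_p := tsum_eq_sum_add_tsum_notMem (f := fun y => phi (p y)) hFS hsummable_p
  have hsplit_q := tsum_eq_sum_add_tsum_notMem (f := fun y => phi (q y)) hFS hsummable_q
  calc _ ≤ |∑ y ∈ F, phi (p y) - ∑ y ∈ F, phi (q y)| + ε := by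
        rw [hsplit_p, hsplit_q, add_sub_add_comm]
        exact (abs_add_le _ _).trans (add_le_add_right htails _)
    _ ≤ F.card * phi δ + 2 / (Real.exp 1 * Real.log 2) / δ * ∑ y ∈ F, |p y - q y| + ε := by
        gcongr
        exact abs_sum_phi_sub_sum_phi_le (fun y hy => hp y (hFS hy)) (fun y hy => hq y (hFS hy))
          hδ0 hδ
    _ ≤ M * phi δ + 2 / (Real.exp 1 * Real.log 2) / δ * ∑' y : S, |p y - q y| + ε := by gcongr
    _ = _ := by ring

end LocalEntropy

section Tree

variable {T : Set (List ℕ)} {x y v : List ℕ}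

/-- The edges of `T`, recorded as an interior vertex together with one of its successors. -/
abbrev Edge (T : Set (List ℕ)) : Type := Σ x : intr T, succs T x

/-- The sum of `g` over the edges of the geodesic from the root to `v`. -/
def pathSum (g : List ℕ → List ℕ → ℝ) (v : List ℕ) : ℝ :=
  ∑ i ∈ Finset.range v.length, g (v.take i) (v.take (i + 1))

lemma prefix_of_mem_succs (hy : y ∈ succs T x) : x <+: y := by
  obtain ⟨-, n, rfl⟩ := hy
  exact List.prefix_append x [n]

lemma mem_intr_of_mem_succs (hT : IsTree T) (hy : y ∈ succs T x) : x ∈ intr T :=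
  ⟨hT.2 y hy.1 x (prefix_of_mem_succs hy), fun hx => Set.eq_empty_iff_forall_notMem.1 hx.2 y hy⟩

lemma take_succ_mem_succs (hT : IsTree T) (hv : v ∈ T) {i : ℕ} (hi : i < v.length) :
    v.take (i + 1) ∈ succs T (v.take i) :=
  ⟨hT.2 v hv _ (List.take_prefix _ _), v[i], (List.take_append_getElem hi).symm⟩

lemma exists_take_of_mem_succs (hy : y ∈ succs T x) (hyv : y <+: v) :
    ∃ i < v.length, x = v.take i ∧ y = v.take (i + 1) := by
  obtain ⟨-, n, rfl⟩ := hy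
  have hlen : (x ++ [n]).length = x.length + 1 := by simp
  refine ⟨x.length, hlen.symm.trans_le hyv.length_le, ?_, ?_⟩
  · exact List.prefix_iff_eq_take.1 ((List.prefix_append x [n]).trans hyv)
  · rw [← hlen]
    exact List.prefix_iff_eq_take.1 hyv

lemma exists_mem_succs_prefix (hT : IsTree T) (hv : v ∈ T) (hxv : x <+: v) (hne : x ≠ v) :
    ∃ y ∈ succs T x, y <+: v := by
  have hlt : x.length < v.length :=
    hxv.length_le.lt_of_ne fun h => hne (hxv.eq_of_length h)
  have hmem := take_succ_mem_succs hT hv hlt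
  rw [← List.prefix_iff_eq_take.1 hxv] at hmem
  exact ⟨_, hmem, List.take_prefix _ _⟩

lemma eq_of_mem_bdry_of_prefix (hT : IsTree T) (hx : x ∈ bdry T) (hv : v ∈ T) (hxv : x <+: v) :
    x = v := by
  by_contra hne
  obtain ⟨y, hy, -⟩ := exists_mem_succs_prefix hT hv hxv hne
  exact (mem_intr_of_mem_succs hT hy).2 hx

lemma eq_of_mem_succs_of_prefix {z : List ℕ} (hy : y ∈ succs T x) (hz : z ∈ succs T x)
    (hyv : y <+: v) (hzv : z <+: v) : y = z := by
  obtain ⟨-, m, rfl⟩ := hy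
  obtain ⟨-, n, rfl⟩ := hz
  exact (List.prefix_of_prefix_length_le hyv hzv (by simp)).eq_of_length (by simp)

/-- The `i`-th edge of the geodesic from the root to `v`. -/
def pathEdge (hT : IsTree T) (hv : v ∈ T) (i : Fin v.length) : Edge T :=
  ⟨⟨v.take i, mem_intr_of_mem_succs hT (take_succ_mem_succs hT hv i.2)⟩,
    ⟨v.take (i + 1), take_succ_mem_succs hT hv i.2⟩⟩

lemma pathEdge_injective (hT : IsTree T) (hv : v ∈ T) : Function.Injective (pathEdge hT hv) := by
  intro i j hij
  have hlen : (v.take i).length = (v.take j).length :=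
    congrArg (fun e : Edge T => (e.1 : List ℕ).length) hij
  rw [List.length_take_of_le i.2.le, List.length_take_of_le j.2.le] at hlen
  exact Fin.ext hlen

lemma mem_range_pathEdge (hT : IsTree T) (hv : v ∈ T) (e : Edge T) (he : (e.2 : List ℕ) <+: v) :
    e ∈ Set.range (pathEdge hT hv) := by
  obtain ⟨⟨x, hx⟩, y, hy⟩ := e
  obtain ⟨i, hi, rfl, rfl⟩ := exists_take_of_mem_succs hy he
  exact ⟨⟨i, hi⟩, rfl⟩

lemma hasSum_ite_prefix_pathSum (hT : IsTree T) (hv : v ∈ T) (g : List ℕ → List ℕ → ℝ) :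
    HasSum (fun e : Edge T => if (e.2 : List ℕ) <+: v then g e.1 e.2 else 0) (pathSum g v) := by
  rw [← (pathEdge_injective hT hv).hasSum_iff, pathSum, ← Fin.sum_univ_eq_sum_range
    fun i => g (v.take i) (v.take (i + 1))]
  · convert hasSum_fintype _ using 2 with i
    exact (if_pos (List.take_prefix _ _)).symm
  · exact fun e he => if_neg fun h => he (mem_range_pathEdge hT hv e h)

end Tree

section Mass

variable {T : Set (List ℕ)} {P Q : List ℕ → ℝ} {x y v : List ℕ}

lemma mass_term_nonneg (hP : IsProbOn (bdry T) P) (y : List ℕ) (v : bdry T) :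
    0 ≤ if y <+: (v : List ℕ) then P v else 0 := by
  split_ifs
  exacts [(hP.1 v v.2).le, le_rfl]

lemma hasSum_mass (hP : IsProbOn (bdry T) P) (y : List ℕ) :
    HasSum (fun v : bdry T => if y <+: (v : List ℕ) then P v else 0) (mass T P y) := by
  have hcone : Summable fun v : cone T y => P v :=
    hP.2.summable.comp_injective (Set.inclusion_injective fun v hv => hv.1)
  have hindicator : HasSum ((cone T y).indicator P) (mass T P y) :=
    hasSum_subtype_iff_indicator.1 hcone.hasSum
  refine (hasSum_subtype_iff_indicator (f := fun v => if y <+: v then P v else 0)).2 ?_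
  convert hindicator using 1
  funext v
  by_cases hv : v ∈ bdry T <;> by_cases hyv : y <+: v <;> simp [Set.indicator, cone, hv, hyv]

lemma mass_nonneg (hP : IsProbOn (bdry T) P) (y : List ℕ) : 0 ≤ mass T P y :=
  (hasSum_mass hP y).nonneg (mass_term_nonneg hP y)

lemma mass_pos_iff (hP : IsProbOn (bdry T) P) : 0 < mass T P y ↔ (cone T y).Nonempty := by
  refine ⟨fun h => ?_, fun ⟨v, hv, hyv⟩ => ?_⟩
  · by_contra hempty
    rw [mass, Set.not_nonempty_iff_eq_empty.1 hempty, tsum_empty] at h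
    exact h.false
  · calc 0 < P v := hP.1 v hv
      _ = if y <+: v then P v else 0 := (if_pos hyv).symm
      _ ≤ mass T P y := le_hasSum (hasSum_mass hP y) ⟨v, hv⟩ fun w _ => mass_term_nonneg hP y w

lemma mass_eq_zero_iff (hP : IsProbOn (bdry T) P) : mass T P y = 0 ↔ ¬ (cone T y).Nonempty := by
  rw [← mass_pos_iff hP, not_lt, (mass_nonneg hP y).ge_iff_eq']

lemma mass_nil (hP : IsProbOn (bdry T) P) : mass T P [] = 1 :=
  (hasSum_mass hP []).unique (by simpa using hP.2)

lemma mass_of_mem_bdry (hT : IsTree T) (hP : IsProbOn (bdry T) P) (hx : x ∈ bdry T) :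
    mass T P x = P x := by
  refine (hasSum_mass hP x).unique ?_
  have := hasSum_single (f := fun v : bdry T => if x <+: (v : List ℕ) then P v else 0) ⟨x, hx⟩
    fun w hw => if_neg fun hxw => hw (Subtype.ext (eq_of_mem_bdry_of_prefix hT hx w.2.1 hxw).symm)
  simpa only [if_pos List.prefix_rfl] using this

lemma mass_le_of_prefix (hP : IsProbOn (bdry T) P) (hxy : x <+: y) : mass T P y ≤ mass T P x := by
  refine hasSum_le (fun v => ?_) (hasSum_mass hP y) (hasSum_mass hP x)
  by_cases hyv : y <+: (v : List ℕ)
  · rw [if_pos hyv, if_pos (hxy.trans hyv)]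
  · rw [if_neg hyv]
    exact mass_term_nonneg hP x v

lemma hasSum_ite_prefix_succs (hT : IsTree T) (hx : x ∉ bdry T) (hv : v ∈ bdry T) (c : ℝ) :
    HasSum (fun y : succs T x => if (y : List ℕ) <+: v then c else 0)
      (if x <+: v then c else 0) := by
  by_cases hxv : x <+: v
  · obtain ⟨y, hy, hyv⟩ := exists_mem_succs_prefix hT hv.1 hxv fun h => hx (h ▸ hv)
    have := hasSum_single (f := fun y : succs T x => if (y : List ℕ) <+: v then c else 0) ⟨y, hy⟩
      fun z hz => if_neg fun hzv => hz (Subtype.ext (eq_of_mem_succs_of_prefix z.2 hy hzv hyv))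
    simpa only [if_pos hyv, if_pos hxv] using this
  · have hyv (y : succs T x) : ¬ (y : List ℕ) <+: v :=
      fun hyv => hxv ((prefix_of_mem_succs y.2).trans hyv)
    simpa only [if_neg hxv, if_neg (hyv _)] using hasSum_zero

lemma hasSum_mass_succs (hT : IsTree T) (hP : IsProbOn (bdry T) P) (hx : x ∉ bdry T) :
    HasSum (fun y : succs T x => mass T P y) (mass T P x) :=
  hasSum_comm_of_nonneg (fun v y => mass_term_nonneg hP y v)
    (fun v => hasSum_ite_prefix_succs hT hx v.2 (P v)) (fun y => hasSum_mass hP y)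
    (hasSum_mass hP x)

end Mass

section Forward

variable {T : Set (List ℕ)} {P Q : List ℕ → ℝ} {x y v : List ℕ}

lemma mass_mul_fwd (hP : IsProbOn (bdry T) P) (hxy : x <+: y) :
    mass T P x * fwd T P x y = mass T P y :=
  mul_div_cancel_of_imp' fun hx => (hx ▸ mass_le_of_prefix hP hxy).antisymm (mass_nonneg hP y)

lemma fwd_mem_Icc (hP : IsProbOn (bdry T) P) (hxy : x <+: y) : fwd T P x y ∈ Set.Icc 0 1 :=
  ⟨div_nonneg (mass_nonneg hP y) (mass_nonneg hP x),
    div_le_one_of_le₀ (mass_le_of_prefix hP hxy) (mass_nonneg hP x)⟩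

lemma hasSum_fwd_succs (hT : IsTree T) (hP : IsProbOn (bdry T) P) (hx : x ∉ bdry T)
    (hcone : (cone T x).Nonempty) : HasSum (fun y : succs T x => fwd T P x y) 1 := by
  have := (hasSum_mass_succs hT hP hx).div_const (mass T P x)
  rwa [div_self ((mass_pos_iff hP).2 hcone).ne'] at this

lemma hasSum_mass_mul_fwd_succs (hT : IsTree T) (hP : IsProbOn (bdry T) P)
    (hQ : IsProbOn (bdry T) Q) (hx : x ∉ bdry T) :
    HasSum (fun y : succs T x => mass T P x * fwd T Q x y) (mass T P x) := by
  by_cases hcone : (cone T x).Nonempty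
  · simpa only [mul_one] using (hasSum_fwd_succs hT hQ hx hcone).mul_left (mass T P x)
  · simpa only [(mass_eq_zero_iff hP).2 hcone, zero_mul] using hasSum_zero

lemma fwd_pos (hP : IsProbOn (bdry T) P) (hv : v ∈ bdry T) (hxy : x <+: y) (hyv : y <+: v) :
    0 < fwd T P x y :=
  div_pos ((mass_pos_iff hP).2 ⟨v, hv, hyv⟩) ((mass_pos_iff hP).2 ⟨v, hv, hxy.trans hyv⟩)

lemma mass_mul_inv_fwd_div_fwd (hP : IsProbOn (bdry T) P) (hQ : IsProbOn (bdry T) Q)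
    (x y : List ℕ) : mass T P y * (fwd T P x y / fwd T Q x y)⁻¹ = mass T P x * fwd T Q x y := by
  by_cases hcone : (cone T y).Nonempty
  · have := ((mass_pos_iff hP).2 hcone).ne'
    rw [inv_div, fwd.eq_def T P]
    field_simp
  · simp only [fwd, (mass_eq_zero_iff hP).2 hcone, (mass_eq_zero_iff hQ).2 hcone, zero_div,
      zero_mul, mul_zero]

lemma pathSum_log_fwd (hT : IsTree T) (hP : IsProbOn (bdry T) P) (hv : v ∈ bdry T) :
    pathSum (fun x y => Real.log (fwd T P x y)) v = Real.log (P v) := by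
  have hmass (i : ℕ) : mass T P (v.take i) ≠ 0 :=
    ((mass_pos_iff hP).2 ⟨v, hv, List.take_prefix i v⟩).ne'
  calc pathSum (fun x y => Real.log (fwd T P x y)) v
      = ∑ i ∈ Finset.range v.length,
          (Real.log (mass T P (v.take (i + 1))) - Real.log (mass T P (v.take i))) :=
        Finset.sum_congr rfl fun i _ => Real.log_div (hmass _) (hmass _)
    _ = Real.log (mass T P (v.take v.length)) - Real.log (mass T P (v.take 0)) :=
        Finset.sum_range_sub (fun i => Real.log (mass T P (v.take i))) _
    _ = Real.log (P v) := by
        rw [List.take_length, List.take_zero, mass_of_mem_bdry hT hP hv, mass_nil hP,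
          Real.log_one, sub_zero]

lemma pathSum_log_fwd_div_fwd (hT : IsTree T) (hP : IsProbOn (bdry T) P)
    (hQ : IsProbOn (bdry T) Q) (hv : v ∈ bdry T) :
    pathSum (fun x y => Real.log (fwd T P x y / fwd T Q x y)) v = Real.log (P v / Q v) := by
  have hfwd {R : List ℕ → ℝ} (hR : IsProbOn (bdry T) R) (i : ℕ) :
      fwd T R (v.take i) (v.take (i + 1)) ≠ 0 :=
    (fwd_pos hR hv (List.take_prefix_take_left i.le_succ) (List.take_prefix _ v)).ne'
  rw [Real.log_div (hP.1 v hv).ne' (hQ.1 v hv).ne', ← pathSum_log_fwd hT hP hv,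
    ← pathSum_log_fwd hT hQ hv, pathSum, pathSum, pathSum, ← Finset.sum_sub_distrib]
  exact Finset.sum_congr rfl fun i _ => Real.log_div (hfwd hP i) (hfwd hQ i)

end Forward

section ChainRules

variable {T : Set (List ℕ)} {P Q : List ℕ → ℝ} {L H D s : ℝ}

lemma hasSum_mul_pathSum_iff (hT : IsTree T) (hP : IsProbOn (bdry T) P)
    {g : List ℕ → List ℕ → ℝ} (hg : ∀ x, ∀ y ∈ succs T x, 0 ≤ g x y) :
    HasSum (fun v : bdry T => P v * pathSum g v) s ↔
      HasSum (fun e : Edge T => mass T P e.2 * g e.1 e.2) s := by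
  let f (v : bdry T) (e : Edge T) : ℝ :=
    (if (e.2 : List ℕ) <+: (v : List ℕ) then P v else 0) * g e.1 e.2
  have hf (v : bdry T) (e : Edge T) : 0 ≤ f v e :=
    mul_nonneg (mass_term_nonneg hP e.2 v) (hg e.1 e.2 e.2.2)
  have hrow (v : bdry T) : HasSum (f v) (P v * pathSum g v) := by
    simpa only [f, mul_ite, ite_mul, mul_zero, zero_mul] using
      (hasSum_ite_prefix_pathSum hT v.2.1 g).mul_left (P v)
  have hcol (e : Edge T) : HasSum (fun v => f v e) (mass T P e.2 * g e.1 e.2) :=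
    (hasSum_mass hP e.2).mul_right _
  exact ⟨hasSum_comm_of_nonneg hf hrow hcol, hasSum_comm_of_nonneg (fun e v => hf v e) hcol hrow⟩

lemma hasSum_mul_tsum_succs {c : List ℕ → ℝ} {f : List ℕ → List ℕ → ℝ}
    (h : HasSum (fun e : Edge T => c e.1 * f e.1 e.2) s) :
    HasSum (fun x : intr T => c x * ∑' y : succs T x, f x y) s := by
  refine h.sigma fun x => ?_
  rw [← tsum_mul_left]
  exact (h.summable.sigma_factor x).hasSum

lemma hasSum_mass_edges (hT : IsTree T) (hP : IsProbOn (bdry T) P)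
    (hL : HasSum (fun v : bdry T => ((v : List ℕ).length : ℝ) * P v) L) :
    HasSum (fun e : Edge T => mass T P e.2) L := by
  have := (hasSum_mul_pathSum_iff (g := fun _ _ => 1) hT hP fun _ _ _ => zero_le_one).1
    (by simpa [pathSum, mul_comm] using hL)
  simpa only [mul_one] using this

lemma hasSum_mass_intr (hT : IsTree T) (hP : IsProbOn (bdry T) P)
    (hL : HasSum (fun v : bdry T => ((v : List ℕ).length : ℝ) * P v) L) :
    HasSum (fun x : intr T => mass T P x) L :=
  (hasSum_mass_edges hT hP hL).sigma fun x => hasSum_mass_succs hT hP x.2.2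

lemma hasSum_mass_mul_fwd_edges (hT : IsTree T) (hP : IsProbOn (bdry T) P)
    (hQ : IsProbOn (bdry T) Q)
    (hL : HasSum (fun v : bdry T => ((v : List ℕ).length : ℝ) * P v) L) :
    HasSum (fun e : Edge T => mass T P e.1 * fwd T Q e.1 e.2) L :=
  hasSum_sigma_of_nonneg
    (fun e => mul_nonneg (mass_nonneg hP e.1) (fwd_mem_Icc hQ (prefix_of_mem_succs e.2.2)).1)
    (fun x => hasSum_mass_mul_fwd_succs hT hP hQ x.2.2) (hasSum_mass_intr hT hP hL)

lemma hasSum_mass_mul_Hloc (hT : IsTree T) (hP : IsProbOn (bdry T) P)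
    (hH : HasSum (fun v : bdry T => phi (P v)) H) :
    HasSum (fun x : intr T => mass T P x * Hloc T P x) H := by
  have hpath (v : bdry T) :
      P v * pathSum (fun x y => Real.logb 2 (1 / fwd T P x y)) v = phi (P v) := by
    simp only [phi, Real.logb, one_div, Real.log_inv, ← pathSum_log_fwd hT hP v.2, pathSum,
      ← Finset.sum_neg_distrib, Finset.sum_div]
  have hedge (e : Edge T) : mass T P e.2 * Real.logb 2 (1 / fwd T P e.1 e.2)
      = mass T P e.1 * phi (fwd T P e.1 e.2) := by
    rw [← mass_mul_fwd hP (prefix_of_mem_succs e.2.2), phi, mul_assoc]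
  have hlogb (x y : List ℕ) (hy : y ∈ succs T x) : 0 ≤ Real.logb 2 (1 / fwd T P x y) := by
    obtain ⟨h0, h1⟩ := fwd_mem_Icc hP (prefix_of_mem_succs hy)
    rw [one_div, Real.logb_inv]
    exact neg_nonneg.2 (Real.logb_nonpos one_lt_two h0 h1)
  have hedges := (hasSum_mul_pathSum_iff hT hP hlogb).1 (by simpa only [hpath] using hH)
  simp only [hedge] at hedges
  exact hasSum_mul_tsum_succs (c := mass T P) (f := fun x y => phi (fwd T P x y)) hedges

/- The terms `log r` of `log (P v / Q v)`, with `r = p(y|x) / q(y|x)`, may have either sign. Adding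
`r⁻¹`, whose total contribution is known, makes them nonnegative, so that sums can be swapped. -/
lemma hasSum_mass_mul_log_div (hT : IsTree T) (hP : IsProbOn (bdry T) P)
    (hQ : IsProbOn (bdry T) Q)
    (hL : HasSum (fun v : bdry T => ((v : List ℕ).length : ℝ) * P v) L)
    (hD : HasSum (fun v : bdry T => P v * Real.log (P v / Q v)) D) :
    HasSum (fun e : Edge T =>
      mass T P e.2 * Real.log (mass T P e.2 / (mass T P e.1 * fwd T Q e.1 e.2))) D := by
  let r (x y : List ℕ) : ℝ := fwd T P x y / fwd T Q x y
  have hr (x y : List ℕ) (hy : y ∈ succs T x) : 0 ≤ r x y :=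
    div_nonneg (fwd_mem_Icc hP (prefix_of_mem_succs hy)).1
      (fwd_mem_Icc hQ (prefix_of_mem_succs hy)).1
  have hpath (v : bdry T) :
      P v * Real.log (P v / Q v) + P v * pathSum (fun x y => (r x y)⁻¹) v
        = P v * pathSum (fun x y => Real.log (r x y) + (r x y)⁻¹) v := by
    rw [← pathSum_log_fwd_div_fwd hT hP hQ v.2, ← mul_add, pathSum, pathSum,
      ← Finset.sum_add_distrib, pathSum]
  have hinv : HasSum (fun e : Edge T => mass T P e.2 * (r e.1 e.2)⁻¹) L := by
    simpa only [r, mass_mul_inv_fwd_div_fwd hP hQ] using hasSum_mass_mul_fwd_edges hT hP hQ hL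
  have hinv_leaves := (hasSum_mul_pathSum_iff hT hP fun x y hy => inv_nonneg.2 (hr x y hy)).2 hinv
  have hlog_add_inv (x y : List ℕ) (hy : y ∈ succs T x) : 0 ≤ Real.log (r x y) + (r x y)⁻¹ := by
    rcases (hr x y hy).eq_or_lt with h0 | h0
    · simp [← h0]
    · linarith [Real.one_sub_inv_le_log_of_pos h0]
  have hedges := (hasSum_mul_pathSum_iff hT hP hlog_add_inv).1
    (by simpa only [hpath] using hD.add hinv_leaves)
  have hterm (e : Edge T) : mass T P e.2 * (Real.log (r e.1 e.2) + (r e.1 e.2)⁻¹)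
      - mass T P e.2 * (r e.1 e.2)⁻¹
        = mass T P e.2 * Real.log (mass T P e.2 / (mass T P e.1 * fwd T Q e.1 e.2)) := by
    rw [← mul_sub, add_sub_cancel_right, ← div_div]
    rfl
  simpa only [hterm, add_sub_cancel_right] using hedges.sub hinv

end ChainRules

section Comparison

variable {T : Set (List ℕ)} {P Q : List ℕ → ℝ} {L H D h ε δ : ℝ} {M : ℕ} {x : List ℕ}

/-- The `ℓ¹` distance between the transition probabilities `p(·|x)` and `q(·|x)`, that is, twice
their total variation distance. -/
def transDist (T : Set (List ℕ)) (P Q : List ℕ → ℝ) (x : List ℕ) : ℝ :=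
  ∑' y : succs T x, |fwd T P x y - fwd T Q x y|

lemma abs_mass_sub_mass_mul_fwd (hP : IsProbOn (bdry T) P) (e : Edge T) :
    |mass T P e.2 - mass T P e.1 * fwd T Q e.1 e.2|
      = mass T P e.1 * |fwd T P e.1 e.2 - fwd T Q e.1 e.2| := by
  rw [← mass_mul_fwd hP (prefix_of_mem_succs e.2.2), ← mul_sub, abs_mul,
    abs_of_nonneg (mass_nonneg hP e.1)]

lemma exists_hasSum_mass_mul_transDist (hT : IsTree T) (hP : IsProbOn (bdry T) P)
    (hQ : IsProbOn (bdry T) Q)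
    (hL : HasSum (fun v : bdry T => ((v : List ℕ).length : ℝ) * P v) L)
    (hD : HasSum (fun v : bdry T => P v * Real.log (P v / Q v)) D) :
    ∃ S ≤ √(2 * L * D), HasSum (fun x : intr T => mass T P x * transDist T P Q x) S := by
  have hmass := hasSum_mass_edges hT hP hL
  have hmass_fwd := hasSum_mass_mul_fwd_edges hT hP hQ hL
  have habs_cont (e : Edge T) (he : mass T P e.1 * fwd T Q e.1 e.2 = 0) : mass T P e.2 = 0 := by
    rw [mass_eq_zero_iff hP]
    rintro ⟨v, hv, hyv⟩
    have hxy := prefix_of_mem_succs e.2.2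
    have hmass_pos := (mass_pos_iff hP).2 ⟨v, hv, hxy.trans hyv⟩
    exact (mul_pos hmass_pos (fwd_pos hQ hv hxy hyv)).ne' he
  have hdist : HasSum (fun e : Edge T => mass T P e.1 * |fwd T P e.1 e.2 - fwd T Q e.1 e.2|)
      (∑' e : Edge T, |mass T P e.2 - mass T P e.1 * fwd T Q e.1 e.2|) := by
    simpa only [abs_mass_sub_mass_mul_fwd hP] using
      (hmass.summable.sub hmass_fwd.summable).abs.hasSum
  refine ⟨_, ?_, hasSum_mul_tsum_succs (f := fun x y => |fwd T P x y - fwd T Q x y|) hdist⟩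
  exact pinsker_tsum_abs_sub_le_sqrt (a := fun e : Edge T => mass T P e.2)
    (b := fun e => mass T P e.1 * fwd T Q e.1 e.2) (fun e => mass_nonneg hP e.2)
    (fun e => mul_nonneg (mass_nonneg hP e.1) (fwd_mem_Icc hQ (prefix_of_mem_succs e.2.2)).1)
    habs_cont hmass hmass_fwd (hasSum_mass_mul_log_div hT hP hQ hL hD)

lemma abs_Hloc_sub_Hloc_le (hT : IsTree T) (hP : IsProbOn (bdry T) P) (hQ : IsProbOn (bdry T) Q)
    (hx : x ∉ bdry T) (hcone : (cone T x).Nonempty)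
    (htails : HasSmallTails (succs T x) (fwd T P x) (fwd T Q x) M ε)
    (hδ0 : 0 < δ) (hδ : δ ≤ 1 / 2) :
    |Hloc T P x - Hloc T Q x|
      ≤ ε + M * phi δ + 2 / (Real.exp 1 * Real.log 2) / δ * transDist T P Q x :=
  abs_tsum_phi_sub_tsum_phi_le (fun _ hy => fwd_mem_Icc hP (prefix_of_mem_succs hy))
    (fun _ hy => fwd_mem_Icc hQ (prefix_of_mem_succs hy))
    ((hasSum_fwd_succs hT hP hx hcone).summable.sub
      (hasSum_fwd_succs hT hQ hx hcone).summable).abs htails hδ0 hδ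

lemma abs_mass_mul_Hloc_sub_le (hT : IsTree T) (hP : IsProbOn (bdry T) P)
    (hQ : IsProbOn (bdry T) Q) (hx : x ∉ bdry T)
    (htails : (cone T x).Nonempty → HasSmallTails (succs T x) (fwd T P x) (fwd T Q x) M ε)
    (hconst : (cone T x).Nonempty → Hloc T Q x = h) (hδ0 : 0 < δ) (hδ : δ ≤ 1 / 2) :
    |mass T P x * (Hloc T P x - h)|
      ≤ mass T P x * (ε + M * phi δ)
        + 2 / (Real.exp 1 * Real.log 2) / δ * (mass T P x * transDist T P Q x) := by
  by_cases hcone : (cone T x).Nonempty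
  · rw [abs_mul, abs_of_nonneg (mass_nonneg hP x), ← hconst hcone, mul_left_comm _ (mass T P x),
      ← mul_add]
    exact mul_le_mul_of_nonneg_left
      (abs_Hloc_sub_Hloc_le hT hP hQ hx hcone (htails hcone) hδ0 hδ) (mass_nonneg hP x)
  · simp [(mass_eq_zero_iff hP).2 hcone]

lemma pos_of_hasSum_length_mul (hroot : [] ∉ bdry T) (hP : IsProbOn (bdry T) P)
    (hL : HasSum (fun v : bdry T => ((v : List ℕ).length : ℝ) * P v) L) : 0 < L := by
  refine one_pos.trans_le (hasSum_le (fun v => ?_) hP.2 hL)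
  have hlen : (1 : ℝ) ≤ (v : List ℕ).length := by
    exact_mod_cast List.length_pos_iff.2 fun hv => hroot (hv ▸ v.2)
  exact le_mul_of_one_le_left (hP.1 v v.2).le hlen

lemma expLen_one (T : Set (List ℕ)) (P : List ℕ → ℝ) :
    expLen T (fun _ => 1) P = ∑' v : bdry T, ((v : List ℕ).length : ℝ) * P v := by
  simp only [expLen, lenWt, Finset.sum_const, Finset.card_range, nsmul_one]

lemma const_mul_sqrt_two_mul_mul_log_two_mul (hL : 0 < L) :
    2 / (Real.exp 1 * Real.log 2) / δ * √(2 * L * (Real.log 2 * D))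
      = 2 * √2 / (Real.exp 1 * √(Real.log 2)) / δ * √(D / L) * L := by
  have hlog : 0 < Real.log 2 := Real.log_pos one_lt_two
  have hsqrt : √(2 * L * (Real.log 2 * D)) = √2 * √(Real.log 2) * L * √(D / L) := by
    rw [show 2 * L * (Real.log 2 * D) = 2 * Real.log 2 * L ^ 2 * (D / L) by field_simp,
      Real.sqrt_mul (by positivity), Real.sqrt_mul (by positivity), Real.sqrt_sq hL.le,
      Real.sqrt_mul zero_le_two]
  have hsq : √(Real.log 2) ^ 2 = Real.log 2 := Real.sq_sqrt hlog.le
  have : √(Real.log 2) ≠ 0 := (Real.sqrt_pos.2 hlog).ne'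
  rw [hsqrt]
  nth_rw 1 [← hsq]
  field_simp

end Comparison

theorem boecherer_amjad_general {T : Set (List ℕ)} (hT : IsTree T) (hroot : [] ∉ bdry T)
    {P Q : List ℕ → ℝ} (hP : IsProbOn (bdry T) P) (hQ : IsProbOn (bdry T) Q) {L H D h : ℝ}
    (hL : HasSum (fun v : bdry T => ((v : List ℕ).length : ℝ) * P v) L)
    (hH : HasSum (fun v : bdry T => phi (P v)) H)
    (hD : HasSum (fun v : bdry T => P v * Real.logb 2 (P v / Q v)) D)
    (hconst : ∀ x ∈ intr T, (cone T x).Nonempty → Hloc T Q x = h) {ε : ℝ} {M : ℕ}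
    (htails : ∀ x ∈ intr T, (cone T x).Nonempty →
      HasSmallTails (succs T x) (fwd T P x) (fwd T Q x) M ε)
    {δ : ℝ} (hδ0 : 0 < δ) (hδ : δ ≤ 1 / 2) :
    |H / L - h| ≤ ε + M * phi δ
      + 2 * √2 / (Real.exp 1 * √(Real.log 2)) / δ * √(D / L) := by
  have hL0 : 0 < L := pos_of_hasSum_length_mul hroot hP hL
  have hlog : 0 < Real.log 2 := Real.log_pos one_lt_two
  have hD' : HasSum (fun v : bdry T => P v * Real.log (P v / Q v)) (Real.log 2 * D) := by
    simpa [Real.logb, mul_left_comm, mul_div_cancel₀, hlog.ne'] using hD.mul_left (Real.log 2)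
  obtain ⟨S, hS, hdist⟩ := exists_hasSum_mass_mul_transDist hT hP hQ hL hD'
  have hmass := hasSum_mass_intr hT hP hL
  have hdiff : HasSum (fun x : intr T => mass T P x * (Hloc T P x - h)) (H - L * h) := by
    simpa only [mul_sub] using (hasSum_mass_mul_Hloc hT hP hH).sub (hmass.mul_right h)
  have hbound := (hmass.mul_right (ε + M * phi δ)).add
    (hdist.mul_left (2 / (Real.exp 1 * Real.log 2) / δ))
  have hle : |H - L * h| ≤ L * (ε + M * phi δ) + 2 / (Real.exp 1 * Real.log 2) / δ * S :=
    hdiff.norm_le_of_bounded hbound fun x =>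
      abs_mass_mul_Hloc_sub_le hT hP hQ x.2.2 (htails x x.2) (hconst x x.2) hδ0 hδ
  calc |H / L - h| = |H - L * h| / L := by
        rw [← abs_of_pos hL0, ← abs_div, abs_of_pos hL0, sub_div, mul_div_cancel_left₀ h hL0.ne']
    _ ≤ (L * (ε + M * phi δ)
          + 2 / (Real.exp 1 * Real.log 2) / δ * √(2 * L * (Real.log 2 * D))) / L := by
        gcongr
        exact hle.trans (by gcongr)
    _ = _ := by
        rw [const_mul_sqrt_two_mul_mul_log_two_mul hL0]
        field_simp

/-- Comparison with a memoryless reference measure (generalised Böcherer–Amjad bound):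
with the standard length function `ℓ ≡ 1` and constant local entropies `H_q(x) = h`,
`|H(P)/ℓ_♯(P) − h| ≤ 2ε + M·φ(δ) + (C/δ)·√(D(P‖Q)/ℓ_♯(P))`. -/
theorem boecherer_amjad
    (T : Set (List ℕ)) (hT : IsTree T) (hU : NoUnary T) (hG : NoInfGeo T)
    (hB : (bdry T).Nonempty) (hroot : ([] : List ℕ) ∈ intr T)
    (P Q : List ℕ → ℝ) (hP : IsProbOn (bdry T) P) (hQ : IsProbOn (bdry T) Q)
    (hlenSharpP : Summable fun v : bdry T => ((v : List ℕ).length : ℝ) * P v)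
    (hlenSharpQ : Summable fun v : bdry T => ((v : List ℕ).length : ℝ) * Q v)
    (hHP : Summable fun v : bdry T => phi (P v))
    (hHQ : Summable fun v : bdry T => phi (Q v))
    (hD : Summable fun v : bdry T => |P v * Real.logb 2 (P v / Q v)|)
    (h : ℝ) (hconst : ∀ x ∈ intr T, Hloc T Q x = h)
    (ε : ℝ) (hε : 0 < ε) (M : ℕ)
    (hM : ∀ x ∈ intr T, ∃ F : Finset (List ℕ), ↑F ⊆ succs T x ∧ F.card ≤ M ∧
      (Summable fun y : {y : List ℕ // y ∈ succs T x ∧ y ∉ F} => phi (fwd T P x y)) ∧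
      (∑' y : {y : List ℕ // y ∈ succs T x ∧ y ∉ F}, phi (fwd T P x y)) < ε ∧
      (Summable fun y : {y : List ℕ // y ∈ succs T x ∧ y ∉ F} => phi (fwd T Q x y)) ∧
      (∑' y : {y : List ℕ // y ∈ succs T x ∧ y ∉ F}, phi (fwd T Q x y)) < ε)
    (δ : ℝ) (hδ0 : 0 < δ) (hδ : δ < 1/2) :
    |(∑' v : bdry T, phi (P v)) / expLen T (fun _ => 1) P - h|
      ≤ 2 * ε + M * phi δ
        + (2 * Real.sqrt 2 / (Real.exp 1 * Real.sqrt (Real.log 2))) / δ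
            * Real.sqrt ((∑' v : bdry T, P v * Real.logb 2 (P v / Q v))
                / expLen T (fun _ => 1) P) := by
  rw [expLen_one]
  exact (boecherer_amjad_general hT hroot.2 hP hQ hlenSharpP.hasSum hHP.hasSum hD.of_abs.hasSum
    (fun x hx _ => hconst x hx) (fun x hx _ => hM x hx) hδ0 hδ.le).trans (by linarith)
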